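/- Characterization of connected graphs attaining the 2n/3 bound: a connected graph G of order m ≥ 3 satisfies γ_t(G) = 2m/3 if and only if G is C_3, C_6, or H(3) for some connected graph H. -/

import Mathlib

/-!
For the forward direction, choose a total dominating set `S` of minimum size which, among those,
spans the most edges. By minimality each `v ∈ S` has a private neighbour, a vertex whose only
neighbour in `S` is `v`. Hence (`exists_charges`) each `v ∈ S` can be charged to a vertex `z ∉ S`:
a private neighbour of `v`, or a private neighbour of a leaf of `G[S]` hanging at `v`. This fails
only if `v` lies on an isolated edge `v w` of `G[S]` whose ends have no private neighbour outside
`S`. Then some `z ∉ S` is adjacent to `v` or `w`, and to no other vertex of `S`, since otherwise an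
exchange would increase the number of edges of `G[S]` (`no_swap`); so `z` is adjacent to both ends,
and `v` and `w` are charged to it. No `z` is charged more than twice (`charges_card_le`), so
`|S| ≤ 2 |V \ S|`, which is the bound `2n/3`. In the case of equality every `z ∉ S` is charged
exactly twice, and the vertices split into triples `h i, a i, b i` spanning paths, with `b i ∉ S`,
such that every other edge joins two `h`s, joins two `b`s, or makes a triple into a triangle whose
`h i` has no edge to another `h j` (`exists_triples`).

It remains to decide which edges between triples are compatible with the minimality of `2 |ι|`,
where `ι` indexes the triples. A triangle admits no edge to another triple
(`IsTriples.no_triangle`), so it is all of `G = C₃`. Otherwise, an edge `b i b j` together with an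
edge `h i h l` forces `l = j` (`IsTriples.eq_of_edges`). If both kinds of edges occur at one triple
`i`, then the triples `i` and `j` form a component and `G = C₆`; if not, connectedness leaves only
edges between `h`s, or only edges between `b`s, and `G` is some `H(3)`.

Conversely, in `H(3)` every total dominating set contains the middle vertex of each attached path
and one of the two ends of that path; the two cycles are checked by evaluation.
-/

open Polynomial Finset

/-- `D` is a total dominating set of `G`: every vertex has a neighbor in `D`. -/
def isTDS {V : Type*} (G : SimpleGraph V) (D : Finset V) : Prop :=
  ∀ v : V, ∃ u ∈ D, G.Adj v u

/-- The total domination polynomial of `G` (with integer coefficients). -/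
noncomputable def tdPoly {V : Type*} [Finite V] (G : SimpleGraph V) : Polynomial ℤ :=
  letI := Fintype.ofFinite V
  letI : DecidablePred (isTDS G) := Classical.decPred _
  ∑ D ∈ Finset.univ.filter (isTDS G), X ^ D.card

/-- `tdCount G i` is the number of total dominating sets of `G` of cardinality `i`. -/
noncomputable def tdCount {V : Type*} [Finite V] (G : SimpleGraph V) (i : ℕ) : ℕ :=
  letI := Fintype.ofFinite V
  letI : DecidablePred (fun D : Finset V => D.card = i ∧ isTDS G D) := Classical.decPred _
  (Finset.univ.filter (fun D : Finset V => D.card = i ∧ isTDS G D)).card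

/-- The total domination number of `G`. -/
noncomputable def tdNum {V : Type*} (G : SimpleGraph V) : ℕ :=
  sInf {k | ∃ D : Finset V, D.card = k ∧ isTDS G D}

/-- `attachP3 H` : to every vertex of `H` a path `P₃` is attached, identified at an end vertex.
The first summand is the vertex set of `H`. -/
def attachP3 {V : Type*} (H : SimpleGraph V) : SimpleGraph (V ⊕ V ⊕ V) :=
  SimpleGraph.fromRel (fun a b =>
    (∃ u v, a = .inl u ∧ b = .inl v ∧ H.Adj u v) ∨
    (∃ v, a = .inl v ∧ b = .inr (.inl v)) ∨
    (∃ v, a = .inr (.inl v) ∧ b = .inr (.inr v)))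

/-- The cycle graph on `ZMod n` (a genuine `n`-cycle for `n ≥ 3`). -/
def cycle (n : ℕ) : SimpleGraph (ZMod n) :=
  SimpleGraph.fromRel (fun a b => a = b + 1)

/-! ### Total domination numbers and connectedness -/

section Basics

variable {W : Type*}

theorem tdNum_le {G : SimpleGraph W} {D : Finset W} (hD : isTDS G D) : tdNum G ≤ D.card :=
  Nat.sInf_le ⟨D, rfl, hD⟩

theorem exists_tds_card [Fintype W] {G : SimpleGraph W} (hG : ∀ v, ∃ u, G.Adj v u) :
    ∃ S : Finset W, S.card = tdNum G ∧ isTDS G S := by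
  have : {k | ∃ D : Finset W, D.card = k ∧ isTDS G D}.Nonempty :=
    ⟨_, Finset.univ, rfl, fun v => by simpa using hG v⟩
  exact Nat.sInf_mem this

theorem tdNum_le_of_iso {V : Type*} [Fintype V] {G : SimpleGraph W} {G' : SimpleGraph V}
    (f : G ≃g G') (hG' : ∀ v, ∃ u, G'.Adj v u) : tdNum G ≤ tdNum G' := by
  obtain ⟨S, hc, hS⟩ := exists_tds_card hG'
  rw [← hc, ← Finset.card_map f.symm.toEquiv.toEmbedding]
  apply tdNum_le
  intro v
  obtain ⟨u, hu, huv⟩ := hS (f v)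
  refine ⟨f.symm u, Finset.mem_map_of_mem _ hu, ?_⟩
  rw [← f.map_adj_iff]
  simpa using huv

theorem tdNum_eq_of_iso {V : Type*} [Fintype V] [Fintype W] {G : SimpleGraph W}
    {G' : SimpleGraph V} (f : G ≃g G') (hG : ∀ v, ∃ u, G.Adj v u) : tdNum G = tdNum G' := by
  refine le_antisymm (tdNum_le_of_iso f fun v => ?_) (tdNum_le_of_iso f.symm hG)
  obtain ⟨u, hu⟩ := hG (f.symm v)
  refine ⟨f u, ?_⟩
  rw [← f.map_adj_iff] at hu
  simpa using hu

/-- A nonempty set of vertices of a connected graph that is closed under adjacency is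
everything. -/
theorem forall_of_closed {G : SimpleGraph W} (hc : G.Connected) (P : W → Prop) {x : W}
    (hx : P x) (hP : ∀ u v, G.Adj u v → P u → P v) (y : W) : P y := by
  obtain ⟨p⟩ := hc.preconnected x y
  induction p with
  | nil => exact hx
  | cons h _ ih => exact ih (hP _ _ h hx)

theorem exists_adj_of_connected [Fintype W] {G : SimpleGraph W} (hc : G.Connected)
    (hm : 2 ≤ Fintype.card W) (v : W) : ∃ u, G.Adj v u := by
  by_contra! h
  have := forall_of_closed hc (fun u => u = v) rfl (by rintro _ u hu rfl; exact absurd hu (h u))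
  have : Fintype.card W ≤ 1 := Fintype.card_le_one_iff.2 fun a b => by rw [this a, this b]
  omega

end Basics

/-! ### The values for `C₃`, `C₆` and `H(3)` -/

section Converse

theorem cycle_adj {n : ℕ} (a b : ZMod n) :
    (cycle n).Adj a b ↔ a ≠ b ∧ (a = b + 1 ∨ b = a + 1) := by
  simp [cycle, SimpleGraph.fromRel_adj]

theorem tdNum_cycle_three : tdNum (cycle 3) = 2 := by
  apply le_antisymm
  · refine tdNum_le (D := ({0, 1} : Finset (ZMod 3))) ?_
    intro v
    simp only [cycle_adj]
    revert v
    decide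
  · obtain ⟨S, hc, hS⟩ := exists_tds_card (G := cycle 3) (by simp only [cycle_adj]; decide)
    rw [← hc]
    simp only [isTDS, cycle_adj] at hS
    revert S
    suffices ∀ S : Finset (ZMod 3), (∀ v, ∃ u ∈ S, v ≠ u ∧ (v = u + 1 ∨ u = v + 1)) →
      2 ≤ S.card from fun S _ h => this S h
    decide

theorem tdNum_cycle_six : tdNum (cycle 6) = 4 := by
  apply le_antisymm
  · refine tdNum_le (D := ({0, 1, 2, 3} : Finset (ZMod 6))) ?_
    intro v
    simp only [cycle_adj]
    revert v
    decide
  · obtain ⟨S, hc, hS⟩ := exists_tds_card (G := cycle 6) (by simp only [cycle_adj]; decide)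
    rw [← hc]
    simp only [isTDS, cycle_adj] at hS
    revert S
    suffices ∀ S : Finset (ZMod 6), (∀ v, ∃ u ∈ S, v ≠ u ∧ (v = u + 1 ∨ u = v + 1)) →
      4 ≤ S.card from fun S _ h => this S h
    decide +kernel

theorem tdNum_attachP3 {V : Type*} [Fintype V] (H : SimpleGraph V) :
    tdNum (attachP3 H) = 2 * Fintype.card V := by
  classical
  have h1 : ∀ v, (attachP3 H).Adj (.inl v) (.inr (.inl v)) := by
    intro v; simp [attachP3, SimpleGraph.fromRel_adj]
  have h2 : ∀ v, (attachP3 H).Adj (.inr (.inl v)) (.inr (.inr v)) := by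
    intro v; simp [attachP3, SimpleGraph.fromRel_adj]
  have hG : ∀ x, ∃ u, (attachP3 H).Adj x u := by
    rintro (v | v | v)
    exacts [⟨_, h1 v⟩, ⟨_, h2 v⟩, ⟨_, (h2 v).symm⟩]
  apply le_antisymm
  · have : isTDS (attachP3 H) (Finset.univ.image (fun v : V => (Sum.inl v : V ⊕ V ⊕ V)) ∪
        Finset.univ.image (fun v : V => (Sum.inr (.inl v) : V ⊕ V ⊕ V))) := by
      rintro (v | v | v)
      · exact ⟨_, by simp, h1 v⟩
      · exact ⟨_, by simp, (h1 v).symm⟩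
      · exact ⟨_, by simp, (h2 v).symm⟩
    refine (tdNum_le this).trans ((Finset.card_union_le _ _).trans ?_)
    have e1 := Finset.card_image_le (s := Finset.univ) (f := fun v : V => (Sum.inl v : V ⊕ V ⊕ V))
    have e2 := Finset.card_image_le (s := Finset.univ)
      (f := fun v : V => (Sum.inr (.inl v) : V ⊕ V ⊕ V))
    rw [Finset.card_univ] at e1 e2
    omega
  · obtain ⟨S, hc, hS⟩ := exists_tds_card hG
    rw [← hc]
    have ha : ∀ v, (Sum.inr (.inl v) : V ⊕ V ⊕ V) ∈ S := by
      intro v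
      obtain ⟨u, hu, huv⟩ := hS (.inr (.inr v))
      rcases u with u | u | u <;> simp [attachP3, SimpleGraph.fromRel_adj] at huv
      rwa [huv]
    have hb : ∀ v, ∃ u ∈ S, u = (Sum.inl v : V ⊕ V ⊕ V) ∨ u = .inr (.inr v) := by
      intro v
      obtain ⟨u, hu, huv⟩ := hS (.inr (.inl v))
      refine ⟨u, hu, ?_⟩
      rcases u with u | u | u <;> simp [attachP3, SimpleGraph.fromRel_adj] at huv
      · simp [huv]
      · simp [huv]
    choose g hgS hg using hb
    have : Function.Injective (Sum.elim (fun v => (Sum.inr (.inl v) : V ⊕ V ⊕ V)) g) := by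
      rintro (v | v) (w | w) h
      · simpa using h
      · rcases hg w with h' | h' <;> simp [h'] at h
      · rcases hg v with h' | h' <;> simp [h'] at h
      · rcases hg w with h' | h' <;> rcases hg v with h'' | h'' <;> simp [h', h''] at h <;>
          rw [h]
    have key := Finset.card_le_card_of_injOn (s := Finset.univ) (t := S) _
      (by rintro (v | v) _ <;> simp [ha, hgS]) this.injOn
    rw [Finset.card_univ, Fintype.card_sum] at key
    omega

end Converse

/-! ### Graphs partitioned into triples -/

section Triples

variable {W : Type*} {ι : Type*}

/-- A partition of the vertices of `G` into paths `h i`, `a i`, `b i`, in which every further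
edge joins two vertices `h`, or two vertices `b`, or closes a path to a triangle whose vertex
`h i` has no other neighbour among the `h j`. -/
structure IsTriples (G : SimpleGraph W) (h a b : ι → W) : Prop where
  cover : ∀ w, ∃ i, w = h i ∨ w = a i ∨ w = b i
  h_inj : ∀ i j, h i = h j → i = j
  a_inj : ∀ i j, a i = a j → i = j
  b_inj : ∀ i j, b i = b j → i = j
  h_ne_a : ∀ i j, h i ≠ a j
  h_ne_b : ∀ i j, h i ≠ b j
  a_ne_b : ∀ i j, a i ≠ b j
  ha : ∀ i, G.Adj (h i) (a i)
  ab : ∀ i, G.Adj (a i) (b i)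
  ha_eq : ∀ i j, G.Adj (h i) (a j) → i = j
  ab_eq : ∀ i j, G.Adj (a i) (b j) → i = j
  aa : ∀ i j, ¬ G.Adj (a i) (a j)
  hb_eq : ∀ i j, G.Adj (h i) (b j) → i = j
  tri : ∀ i j, G.Adj (h i) (b i) → ¬ G.Adj (h i) (h j)

variable {G : SimpleGraph W} {h a b : ι → W}

/-- The bijection between the vertex set of `attachP3` and `W` given by the triples. -/
noncomputable def IsTriples.equiv (T : IsTriples G h a b) : ι ⊕ ι ⊕ ι ≃ W :=
  Equiv.ofBijective (Sum.elim h (Sum.elim a b)) <| by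
    have := T.h_inj; have := T.a_inj; have := T.b_inj
    have h1 := T.h_ne_a; have h2 := T.h_ne_b; have h3 := T.a_ne_b
    constructor
    · rintro (i | i | i) (j | j | j) hij <;> simp only [Sum.elim_inl, Sum.elim_inr] at hij <;>
        grind
    · intro w
      obtain ⟨i, rfl | rfl | rfl⟩ := T.cover w
      exacts [⟨.inl i, rfl⟩, ⟨.inr (.inl i), rfl⟩, ⟨.inr (.inr i), rfl⟩]

/-- Without triangles, reversing all paths preserves the structure. -/
theorem IsTriples.symm (T : IsTriples G h a b) (hT : ∀ i, ¬ G.Adj (h i) (b i)) :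
    IsTriples G b a h where
  cover w := by obtain ⟨i, hi⟩ := T.cover w; exact ⟨i, by tauto⟩
  h_inj := T.b_inj
  a_inj := T.a_inj
  b_inj := T.h_inj
  h_ne_a i j := (T.a_ne_b j i).symm
  h_ne_b i j := (T.h_ne_b j i).symm
  a_ne_b i j := (T.h_ne_a j i).symm
  ha i := (T.ab i).symm
  ab i := (T.ha i).symm
  ha_eq i j hij := (T.ab_eq j i hij.symm).symm
  ab_eq i j hij := (T.ha_eq j i hij.symm).symm
  aa := T.aa
  hb_eq i j hij := (T.hb_eq j i hij.symm).symm
  tri i _ hi := absurd hi.symm (hT i)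

/-- If all further edges join two vertices `h`, then `G` is some `H(3)`. -/
theorem IsTriples.exists_iso (T : IsTriples G h a b) (hc : G.Connected)
    (hT : ∀ i, ¬ G.Adj (h i) (b i)) (hb : ∀ i j, ¬ G.Adj (b i) (b j)) :
    ∃ H : SimpleGraph ι, H.Connected ∧ Nonempty (G ≃g attachP3 H) := by
  have ne : Nonempty ι := by
    obtain ⟨w⟩ := hc.nonempty
    exact ⟨(T.cover w).choose⟩
  have eq1 : ∀ i, T.equiv (.inl i) = h i := fun _ => rfl
  have eq2 : ∀ i, T.equiv (.inr (.inl i)) = a i := fun _ => rfl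
  have eq3 : ∀ i, T.equiv (.inr (.inr i)) = b i := fun _ => rfl
  refine ⟨G.comap h, ?_, ⟨(RelIso.symm ⟨T.equiv, ?_⟩)⟩⟩
  · rw [SimpleGraph.connected_iff]
    refine ⟨fun i j => ?_, ne⟩
    have key := forall_of_closed hc
      (fun w => ∀ k, w = h k ∨ w = a k ∨ w = b k → (G.comap h).Reachable i k) (x := h i) ?_ ?_
      (h j) j (.inl rfl)
    · exact key
    · rintro k (hk | hk | hk)
      · rw [T.h_inj _ _ hk]
      · exact absurd hk (T.h_ne_a _ _)
      · exact absurd hk (T.h_ne_b _ _)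
    · intro u v huv hu k hk
      obtain ⟨l, hl⟩ := T.cover u
      have hil := hu l hl
      -- adjacent vertices lie in the same triple or are joined by an edge of the new graph
      suffices l = k ∨ G.Adj (h l) (h k) by
        rcases this with rfl | hlk
        · exact hil
        · exact hil.trans (SimpleGraph.Adj.reachable (by simpa using hlk))
      have := T.ha_eq; have := T.ab_eq; have := T.aa; have := T.hb_eq; have := huv.symm
      rcases hl with rfl | rfl | rfl <;> rcases hk with rfl | rfl | rfl <;> grind
  · have h1 := T.ha_eq; have h2 := T.ab_eq; have h3 := T.aa; have h4 := T.hb_eq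
    have h5 := T.ha; have h6 := T.ab
    intro x y
    have hs : ∀ u v, G.Adj u v ↔ G.Adj v u := fun u v => G.adj_comm u v
    rcases x with i | i | i <;> rcases y with j | j | j <;>
      simp only [eq1, eq2, eq3, attachP3, SimpleGraph.fromRel_adj] <;> simp
    · constructor
      · intro hij
        exact ⟨fun e => G.loopless.irrefl _ (e ▸ hij), .inl hij⟩
      · rintro ⟨-, hij | hij⟩
        exacts [hij, hij.symm]
    all_goals grind

variable [Fintype ι]

/-- The standard dominating set `{h i, a i}` of a partition into triples. -/
theorem exists_standard (h a : ι → W) : ∃ S : Finset W, S.card ≤ 2 * Fintype.card ι ∧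
    (∀ i, h i ∈ S) ∧ ∀ i, a i ∈ S := by
  classical
  refine ⟨Finset.univ.image h ∪ Finset.univ.image a, ?_, by simp, by simp⟩
  have e1 := Finset.card_image_le (s := Finset.univ) (f := h)
  have e2 := Finset.card_image_le (s := Finset.univ) (f := a)
  have := Finset.card_union_le (Finset.univ.image h) (Finset.univ.image a)
  rw [Finset.card_univ] at e1 e2
  omega

/-- A triangle joined to another triple `j` by the edge `b i b j` wastes a vertex: the two triples
are dominated by `b i`, `b j`, `a j` alone. -/
theorem IsTriples.no_triangle (T : IsTriples G h a b)
    (hmin : ∀ D, isTDS G D → 2 * Fintype.card ι ≤ D.card) (i j : ι)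
    (hi : G.Adj (h i) (b i)) : ¬ G.Adj (b i) (b j) := by
  classical
  intro hij
  have hne : i ≠ j := by rintro rfl; exact G.loopless.irrefl _ hij
  obtain ⟨S, hS, hh, ha⟩ := exists_standard h a
  have := T.h_inj; have := T.a_inj; have := T.h_ne_a
  have hD := hmin (insert (b i) (insert (b j) (((S.erase (a i)).erase (h i)).erase (h j)))) ?_
  · have c1 := Finset.card_insert_le (b i)
      (insert (b j) (((S.erase (a i)).erase (h i)).erase (h j)))
    have c2 := Finset.card_insert_le (b j) (((S.erase (a i)).erase (h i)).erase (h j))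
    rw [Finset.card_erase_of_mem (s := (S.erase (a i)).erase (h i)) (by grind),
      Finset.card_erase_of_mem (s := S.erase (a i)) (by grind),
      Finset.card_erase_of_mem (ha i)] at c2
    have : 3 ≤ S.card := by
      rw [← Finset.card_eq_three.2 ⟨a i, h i, h j, by grind, by grind, by grind, rfl⟩]
      exact Finset.card_le_card (by grind)
    omega
  · intro w
    obtain ⟨l, hl⟩ := T.cover w
    have e1 := T.ha; have e2 := T.ab
    by_cases hli : l = i
    · subst hli
      rcases hl with rfl | rfl | rfl
      · exact ⟨b l, by simp, hi⟩
      · exact ⟨b l, by simp, e2 l⟩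
      · exact ⟨b j, by simp, hij⟩
    by_cases hlj : l = j
    · subst hlj
      rcases hl with rfl | rfl | rfl
      · exact ⟨a l, by grind, e1 l⟩
      · exact ⟨b l, by simp, e2 l⟩
      · exact ⟨b i, by simp, hij.symm⟩
    rcases hl with rfl | rfl | rfl
    · exact ⟨a l, by grind, e1 l⟩
    · exact ⟨h l, by grind, (e1 l).symm⟩
    · exact ⟨a l, by grind, (e2 l).symm⟩

/-- If `h i h l` and `b i b j` are edges with `l ≠ j`, then the triples `i` and `j` are dominated
by `h i`, `b j`, `a j` with the help of `h l`, which wastes a vertex. -/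
theorem IsTriples.eq_of_edges (T : IsTriples G h a b)
    (hmin : ∀ D, isTDS G D → 2 * Fintype.card ι ≤ D.card) {i j l : ι}
    (hij : G.Adj (b i) (b j)) (hil : G.Adj (h i) (h l)) : l = j := by
  classical
  by_contra hlj
  have hne : i ≠ j := by rintro rfl; exact G.loopless.irrefl _ hij
  have hne' : i ≠ l := by rintro rfl; exact G.loopless.irrefl _ hil
  obtain ⟨S, hS, hh, ha⟩ := exists_standard h a
  have := T.h_inj; have := T.a_inj; have := T.h_ne_a
  have hD := hmin (insert (b j) ((S.erase (a i)).erase (h j))) ?_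
  · have c2 := Finset.card_insert_le (b j) ((S.erase (a i)).erase (h j))
    rw [Finset.card_erase_of_mem (s := S.erase (a i)) (by grind),
      Finset.card_erase_of_mem (ha i)] at c2
    have : 2 ≤ S.card := by
      rw [← Finset.card_eq_two.2 ⟨a i, h i, by grind, rfl⟩]
      exact Finset.card_le_card (by grind)
    omega
  · intro w
    obtain ⟨m, hm⟩ := T.cover w
    have e1 := T.ha; have e2 := T.ab
    by_cases hmi : m = i
    · subst hmi
      rcases hm with rfl | rfl | rfl
      · exact ⟨h l, by grind, hil⟩
      · exact ⟨h m, by grind, (e1 m).symm⟩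
      · exact ⟨b j, by simp, hij⟩
    by_cases hmj : m = j
    · subst hmj
      rcases hm with rfl | rfl | rfl
      · exact ⟨a m, by grind, e1 m⟩
      · exact ⟨b m, by simp, e2 m⟩
      · exact ⟨a m, by grind, (e2 m).symm⟩
    rcases hm with rfl | rfl | rfl
    · exact ⟨a m, by grind, e1 m⟩
    · exact ⟨h m, by grind, (e1 m).symm⟩
    · exact ⟨a m, by grind, (e2 m).symm⟩

theorem IsTriples.iso_cycle_three (T : IsTriples G h a b) (hc : G.Connected)
    (hmin : ∀ D, isTDS G D → 2 * Fintype.card ι ≤ D.card) (i : ι)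
    (hi : G.Adj (h i) (b i)) : Nonempty (G ≃g cycle 3) := by
  have hbb := T.no_triangle hmin i
  have e1 := T.ha i; have e2 := T.ab i
  -- the triangle is closed under adjacency
  have all : ∀ w, w = h i ∨ w = a i ∨ w = b i := by
    refine forall_of_closed hc (fun w => w = h i ∨ w = a i ∨ w = b i) (x := h i) (.inl rfl) ?_
    intro u v huv hu
    obtain ⟨l, hl⟩ := T.cover v
    have := T.ha_eq; have := T.ab_eq; have := T.aa; have := T.hb_eq; have := T.tri i
    have := huv.symm
    rcases hu with rfl | rfl | rfl <;> rcases hl with rfl | rfl | rfl <;> grind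
  have bij : Function.Bijective (![h i, a i, b i] : ZMod 3 → W) := by
    constructor
    · have := T.h_ne_a i i; have := T.h_ne_b i i; have := T.a_ne_b i i
      intro x y hxy
      change Fin 3 at x y
      fin_cases x <;> fin_cases y <;> simp at hxy ⊢ <;> grind
    · intro w
      rcases all w with rfl | rfl | rfl
      exacts [⟨(0 : Fin 3), rfl⟩, ⟨(1 : Fin 3), rfl⟩, ⟨(2 : Fin 3), rfl⟩]
  refine ⟨RelIso.symm ⟨Equiv.ofBijective _ bij, ?_⟩⟩
  have d : ∀ x y : ZMod 3, (x ≠ y ∧ (x = y + 1 ∨ y = x + 1)) ↔ x ≠ y := by decide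
  intro x y
  rw [cycle_adj, d]
  refine ⟨fun hxy e => G.loopless.irrefl _ (e ▸ hxy), fun hxy => ?_⟩
  change Fin 3 at x y
  fin_cases x <;> fin_cases y <;> first | exact absurd rfl hxy | skip
  exacts [e1, hi, e1.symm, e2, hi.symm, e2.symm]

theorem IsTriples.iso_cycle_six (T : IsTriples G h a b) (hc : G.Connected)
    (hmin : ∀ D, isTDS G D → 2 * Fintype.card ι ≤ D.card)
    (hT : ∀ i, ¬ G.Adj (h i) (b i)) {i j : ι}
    (hij : G.Adj (h i) (h j)) (hij' : G.Adj (b i) (b j)) : Nonempty (G ≃g cycle 6) := by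
  have hne : i ≠ j := by rintro rfl; exact G.loopless.irrefl _ hij
  have f1 : ∀ l, G.Adj (h i) (h l) → l = j := fun l hl => T.eq_of_edges hmin hij' hl
  have f2 : ∀ l, G.Adj (b i) (b l) → l = j := fun l hl => (T.eq_of_edges hmin hl hij).symm
  have f3 : ∀ l, G.Adj (h j) (h l) → l = i := fun l hl => T.eq_of_edges hmin hij'.symm hl
  have f4 : ∀ l, G.Adj (b j) (b l) → l = i := fun l hl => (T.eq_of_edges hmin hl hij.symm).symm
  have k1 := T.ha_eq; have k2 := T.ab_eq; have k3 := T.aa; have k4 := T.hb_eq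
  have all' : ∀ w, ∀ l, w = h l ∨ w = a l ∨ w = b l → l = i ∨ l = j := by
    have m1 := T.h_inj; have m2 := T.h_ne_a; have m3 := T.h_ne_b
    refine forall_of_closed hc (fun w => ∀ l, w = h l ∨ w = a l ∨ w = b l → l = i ∨ l = j)
      (x := h i) (by grind) ?_
    intro u v huv hu l hl
    obtain ⟨m, hm⟩ := T.cover u
    have := hu m hm
    have := huv.symm
    clear hu
    rcases hm with rfl | rfl | rfl <;> rcases hl with rfl | rfl | rfl <;> grind
  have bij : Function.Bijective (![h i, a i, b i, b j, a j, h j] : ZMod 6 → W) := by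
    constructor
    · have := T.h_ne_a; have := T.h_ne_b; have := T.a_ne_b
      have := T.h_inj; have := T.a_inj; have := T.b_inj
      intro x y hxy
      change Fin 6 at x y
      fin_cases x <;> fin_cases y <;> simp at hxy ⊢ <;> grind
    · intro w
      obtain ⟨l, hl⟩ := T.cover w
      rcases all' w l hl with rfl | rfl <;> rcases hl with rfl | rfl | rfl
      exacts [⟨(0 : Fin 6), rfl⟩, ⟨(1 : Fin 6), rfl⟩, ⟨(2 : Fin 6), rfl⟩,
        ⟨(5 : Fin 6), rfl⟩, ⟨(4 : Fin 6), rfl⟩, ⟨(3 : Fin 6), rfl⟩]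
  refine ⟨RelIso.symm ⟨Equiv.ofBijective _ bij, ?_⟩⟩
  have e1 := T.ha; have e2 := T.ab
  have hs : ∀ u v, G.Adj u v ↔ G.Adj v u := fun u v => G.adj_comm u v
  have hl : ∀ u, ¬ G.Adj u u := G.loopless.irrefl
  have yes : ∀ x y : ZMod 6, y = x + 1 → G.Adj ((![h i, a i, b i, b j, a j, h j] : ZMod 6 → W) x)
      ((![h i, a i, b i, b j, a j, h j] : ZMod 6 → W) y) := by
    rintro x _ rfl
    change Fin 6 at x
    fin_cases x
    exacts [e1 i, e2 i, hij', (e2 j).symm, (e1 j).symm, hij.symm]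
  intro x y
  rw [cycle_adj]
  constructor
  · intro hxy
    replace hxy : G.Adj ((![h i, a i, b i, b j, a j, h j] : ZMod 6 → W) x)
      ((![h i, a i, b i, b j, a j, h j] : ZMod 6 → W) y) := hxy
    by_contra hcon
    have d : ∀ x y : ZMod 6, ¬ (x ≠ y ∧ (x = y + 1 ∨ y = x + 1)) →
        y = x ∨ y = x + 2 ∨ y = x + 3 ∨ y = x + 4 := by decide
    have no : ∀ p q, ¬ G.Adj p q → G.Adj p q → False := fun _ _ h1 h2 => h1 h2
    clear bij yes all'
    rcases d x y hcon with rfl | rfl | rfl | rfl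
    · exact hl _ hxy
    all_goals
      clear hcon d
      change Fin 6 at x
      fin_cases x <;> refine no _ _ ?_ hxy
    · exact show ¬ G.Adj (h i) (b i) by grind
    · exact show ¬ G.Adj (a i) (b j) by grind
    · exact show ¬ G.Adj (b i) (a j) by grind
    · exact show ¬ G.Adj (b j) (h j) by grind
    · exact show ¬ G.Adj (a j) (h i) by grind
    · exact show ¬ G.Adj (h j) (a i) by grind
    · exact show ¬ G.Adj (h i) (b j) by grind
    · exact show ¬ G.Adj (a i) (a j) by grind
    · exact show ¬ G.Adj (b i) (h j) by grind
    · exact show ¬ G.Adj (b j) (h i) by grind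
    · exact show ¬ G.Adj (a j) (a i) by grind
    · exact show ¬ G.Adj (h j) (b i) by grind
    · exact show ¬ G.Adj (h i) (a j) by grind
    · exact show ¬ G.Adj (a i) (h j) by grind
    · exact show ¬ G.Adj (b i) (h i) by grind
    · exact show ¬ G.Adj (b j) (a i) by grind
    · exact show ¬ G.Adj (a j) (b i) by grind
    · exact show ¬ G.Adj (h j) (b j) by grind
  · rintro ⟨-, hxy | hxy⟩
    exacts [(yes _ _ hxy).symm, yes _ _ hxy]

/-- The classification of connected graphs admitting a partition into triples for which the
standard dominating set is optimal. -/
theorem IsTriples.classify (T : IsTriples G h a b) (hc : G.Connected)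
    (hmin : ∀ D, isTDS G D → 2 * Fintype.card ι ≤ D.card) :
    Nonempty (G ≃g cycle 3) ∨ Nonempty (G ≃g cycle 6) ∨
      ∃ H : SimpleGraph ι, H.Connected ∧ Nonempty (G ≃g attachP3 H) := by
  by_cases hT : ∃ i, G.Adj (h i) (b i)
  · obtain ⟨i, hi⟩ := hT
    exact .inl (T.iso_cycle_three hc hmin i hi)
  push Not at hT
  by_cases hb : ∀ i j, ¬ G.Adj (b i) (b j)
  · exact .inr (.inr (T.exists_iso hc hT hb))
  by_cases hh : ∀ i j, ¬ G.Adj (h i) (h j)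
  · exact .inr (.inr ((T.symm hT).exists_iso hc (fun i hi => hT i hi.symm) hh))
  push Not at hb hh
  obtain ⟨i₀, j₀, h₀⟩ := hb
  obtain ⟨i₁, j₁, h₁⟩ := hh
  suffices ∃ i j l, G.Adj (h i) (h l) ∧ G.Adj (b i) (b j) by
    obtain ⟨i, j, l, hil, hij⟩ := this
    obtain rfl := T.eq_of_edges hmin hij hil
    exact .inr (.inl (T.iso_cycle_six hc hmin hT hil hij))
  by_contra! hno
  -- otherwise the triples incident with an edge between two `h` form a component
  have key := forall_of_closed hc
    (fun w => ∀ k, w = h k ∨ w = a k ∨ w = b k → ∃ l, G.Adj (h k) (h l)) (x := h i₁) ?_ ?_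
    (h i₀) i₀ (.inl rfl)
  · obtain ⟨l, hl⟩ := key
    exact hno _ _ _ hl h₀
  · have := T.h_inj; have := T.h_ne_a; have := T.h_ne_b
    grind
  · intro u v huv hu k hk
    obtain ⟨m, hm⟩ := T.cover u
    obtain ⟨l, hl⟩ := hu m hm
    clear hu
    have k1 := T.ha_eq; have k2 := T.ab_eq; have k3 := T.aa; have k4 := T.hb_eq
    have := huv.symm
    rcases hm with rfl | rfl | rfl <;> rcases hk with rfl | rfl | rfl <;> grind

end Triples

/-! ### The structure of an extremal minimum total dominating set -/

section Extremal

variable {W : Type*} {G : SimpleGraph W} {S : Finset W}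

/-- `v` is the only neighbour of `u` in `S`. -/
def OnlyNbr (G : SimpleGraph W) (S : Finset W) (u v : W) : Prop :=
  v ∈ S ∧ ∀ s ∈ S, G.Adj u s ↔ s = v

/-- The set of edges of `G` with both ends in `S`. -/
def innerEdges (G : SimpleGraph W) (S : Finset W) : Set (Sym2 W) :=
  {e | e ∈ G.edgeSet ∧ ∀ x ∈ e, x ∈ S}

theorem exists_onlyNbr (hS : isTDS G S) (hmin : ∀ D, isTDS G D → S.card ≤ D.card) {v : W}
    (hv : v ∈ S) : ∃ u, OnlyNbr G S u v := by
  classical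
  have : ¬ isTDS G (S.erase v) := fun h => by
    have := hmin _ h
    have := Finset.card_erase_lt_of_mem hv
    omega
  simp only [isTDS, not_forall] at this
  obtain ⟨u, hu⟩ := this
  refine ⟨u, hv, ?_⟩
  obtain ⟨s, hs, hus⟩ := hS u
  grind

/-- An isolated edge `v w` of `G[S]` such that `w` has no private neighbour outside `S` can be
traded for a path: if `x ∉ S` is adjacent to `v` and to `y ∈ S`, then replacing `w` by `x` gives a
total dominating set spanning more edges. -/
theorem no_swap [Finite W] (hS : isTDS G S)
    (hmax : ∀ D, isTDS G D → D.card = S.card → (innerEdges G D).ncard ≤ (innerEdges G S).ncard)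
    {v w x y : W} (hv : v ∈ S) (hw : w ∈ S) (hvw : OnlyNbr G S v w) (hwv : OnlyNbr G S w v)
    (hp : ∀ u, u ∉ S → ¬ OnlyNbr G S u w) (hx : x ∉ S) (hxv : G.Adj x v)
    (hy : y ∈ S) (hyv : y ≠ v) (hyw : y ≠ w) : ¬ G.Adj x y := by
  classical
  intro hxy
  have hne : v ≠ w := by
    rintro rfl
    exact G.loopless.irrefl _ ((hvw.2 _ hv).2 rfl)
  have hD : isTDS G (insert x (S.erase w)) := by
    intro u
    by_cases huv : u = v
    · exact ⟨x, by simp, huv ▸ hxv.symm⟩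
    by_contra! hcon
    have huw : OnlyNbr G S u w := by
      obtain ⟨s, hs, hus⟩ := hS u
      refine ⟨hw, ?_⟩
      grind
    by_cases huS : u ∈ S
    · exact huv ((hwv.2 u huS).1 ((huw.2 w hw).2 rfl).symm)
    · exact hp u huS huw
  have hcard : (insert x (S.erase w)).card = S.card := by
    rw [Finset.card_insert_of_notMem (by grind), Finset.card_erase_add_one hw]
  have hle := hmax _ hD hcard
  have hsub : insert s(x, v) (insert s(x, y) (innerEdges G S \ {s(v, w)})) ⊆
      innerEdges G (insert x (S.erase w)) := by
    intro e he
    rcases he with rfl | rfl | ⟨⟨he, heS⟩, hne'⟩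
    · refine ⟨hxv, ?_⟩
      simp only [Sym2.mem_iff]
      grind
    · refine ⟨hxy, ?_⟩
      simp only [Sym2.mem_iff]
      grind
    · refine ⟨he, fun z hz => ?_⟩
      have hzS := heS z hz
      -- the only edge of `G[S]` through `w` is the one removed
      have : z ≠ w := by
        rintro rfl
        obtain ⟨t, rfl⟩ := Sym2.mem_iff_exists.1 hz
        have ht : t = v := (hwv.2 t (heS t (by simp))).1 he
        subst ht
        exact hne' Sym2.eq_swap
      grind
  have c1 := Set.ncard_le_ncard hsub (Set.toFinite _)
  have n1 : s(x, y) ∉ innerEdges G S \ {s(v, w)} := fun hh => hx (hh.1.2 x (by simp))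
  have n2 : s(x, v) ∉ insert s(x, y) (innerEdges G S \ {s(v, w)}) := by
    rintro (hh | hh)
    · rw [Sym2.eq_iff] at hh
      grind
    · exact hx (hh.1.2 x (by simp))
  rw [Set.ncard_insert_of_notMem n2 (Set.toFinite _),
    Set.ncard_insert_of_notMem n1 (Set.toFinite _)] at c1
  have c2 := Set.le_ncard_sdiff {s(v, w)} (innerEdges G S)
  rw [Set.ncard_singleton] at c2
  omega

/-- The vertex `z` outside `S` is charged by `v ∈ S`: it is a private neighbour of `v`, or of a
vertex of which `v` is the only neighbour in `S`, or it is attached exactly to the two ends of an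
isolated edge of `G[S]` at `v`. -/
def Charges (G : SimpleGraph W) (S : Finset W) (v z : W) : Prop :=
  OnlyNbr G S z v ∨ (∃ w, OnlyNbr G S w v ∧ OnlyNbr G S z w) ∨
    ∃ w, OnlyNbr G S w v ∧ OnlyNbr G S v w ∧ ∀ s ∈ S, G.Adj z s ↔ s = v ∨ s = w

theorem exists_charges [Fintype W] (hc : G.Connected) (hm : 3 ≤ Fintype.card W) (hS : isTDS G S)
    (hmin : ∀ D, isTDS G D → S.card ≤ D.card)
    (hmax : ∀ D, isTDS G D → D.card = S.card → (innerEdges G D).ncard ≤ (innerEdges G S).ncard)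
    {v : W} (hv : v ∈ S) : ∃ z, z ∉ S ∧ Charges G S v z := by
  classical
  by_cases pv : ∃ u, u ∉ S ∧ OnlyNbr G S u v
  · obtain ⟨u, hu, huv⟩ := pv
    exact ⟨u, hu, .inl huv⟩
  push Not at pv
  obtain ⟨w, hwv⟩ := exists_onlyNbr hS hmin hv
  have hw : w ∈ S := by by_contra hh; exact pv w hh hwv
  by_cases pw : ∃ u, u ∉ S ∧ OnlyNbr G S u w
  · obtain ⟨u, hu, huw⟩ := pw
    exact ⟨u, hu, .inr (.inl ⟨w, hwv, huw⟩)⟩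
  push Not at pw
  obtain ⟨u, huw⟩ := exists_onlyNbr hS hmin hw
  have hu : u ∈ S := by by_contra hh; exact pw u hh huw
  obtain rfl : u = v := (hwv.2 u hu).1 ((huw.2 w hw).2 rfl).symm
  -- now `u w` is an isolated edge of `G[S]` and not all of `G`
  obtain ⟨x, hx, hxu⟩ : ∃ x, x ∉ S ∧ (G.Adj x u ∨ G.Adj x w) := by
    by_contra! hcon
    have := forall_of_closed hc (fun y => y = u ∨ y = w) (x := u) (.inl rfl) (by
      intro s t hst hs
      by_cases ht : t ∈ S
      · rcases hs with rfl | rfl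
        · exact .inr ((huw.2 t ht).1 hst)
        · exact .inl ((hwv.2 t ht).1 hst)
      · have := hcon t ht
        have := hst.symm
        grind)
    have h2 : Fintype.card W ≤ ({u, w} : Finset W).card :=
      Finset.card_le_card fun y _ => by simpa using this y
    have := Finset.card_le_two (a := u) (b := w)
    omega
  have hno : ∀ s ∈ S, G.Adj x s → s = u ∨ s = w := by
    intro s hs hxs
    by_contra! hcon
    rcases hxu with hxu | hxw
    · exact no_swap hS hmax hu hw huw hwv pw hx hxu hs hcon.1 hcon.2 hxs
    · exact no_swap hS hmax hw hu hwv huw pv hx hxw hs hcon.2 hcon.1 hxs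
  refine ⟨x, hx, .inr (.inr ⟨w, hwv, huw, ?_⟩)⟩
  have q1 : ¬ OnlyNbr G S x u := pv x hx
  have q2 : ¬ OnlyNbr G S x w := pw x hx
  unfold OnlyNbr at q1 q2
  grind

/-- Two vertices charging the same `z` form, in a suitable order, a path ending in `z`. -/
theorem charges_pair {p q z : W} (hp : p ∈ S) (hq : q ∈ S)
    (hpz : Charges G S p z) (hqz : Charges G S q z) (hpq : p ≠ q) :
    ∃ a h, a ∈ S ∧ h ∈ S ∧ a ≠ h ∧ (a = p ∧ h = q ∨ a = q ∧ h = p) ∧ OnlyNbr G S a h ∧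
      (OnlyNbr G S z a ∨ OnlyNbr G S h a ∧ ∀ s ∈ S, G.Adj z s ↔ s = a ∨ s = h) := by
  have hl : ∀ u, ¬ G.Adj u u := G.loopless.irrefl
  unfold Charges OnlyNbr at *
  rcases hpz with h1 | ⟨w, h1, h2⟩ | ⟨w, h1, h2, h3⟩ <;>
  rcases hqz with h4 | ⟨w', h4, h5⟩ | ⟨w', h4, h5, h6⟩
  · grind
  · exact ⟨p, q, by grind⟩
  · grind
  · exact ⟨q, p, by grind⟩
  · grind
  · grind
  · grind
  · grind
  · exact ⟨p, q, by grind⟩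

theorem charges_card_le (z : W) (F : Finset W) (hF : F ⊆ S) (hz : ∀ v ∈ F, Charges G S v z) :
    F.card ≤ 2 := by
  by_contra! hcon
  obtain ⟨p, q, r, hp, hq, hr, hpq, hpr, hqr⟩ := Finset.two_lt_card_iff.1 hcon
  have hl : ∀ u, ¬ G.Adj u u := G.loopless.irrefl
  have h1 := charges_pair (hF hp) (hF hq) (hz p hp) (hz q hq) hpq
  have h2 := charges_pair (hF hp) (hF hr) (hz p hp) (hz r hr) hpr
  have h3 := charges_pair (hF hq) (hF hr) (hz q hq) (hz r hr) hqr
  unfold OnlyNbr at *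
  grind

/-- A connected graph attaining the bound is partitioned into triples, indexed by the vertices
outside a suitable minimum total dominating set. -/
theorem exists_triples [Fintype W] (hc : G.Connected) (hm : 3 ≤ Fintype.card W)
    (heq : 3 * tdNum G = 2 * Fintype.card W) :
    ∃ (S : Finset W) (h a b : {z // z ∉ S} → W), IsTriples G h a b ∧
      tdNum G = 2 * Nat.card {z // z ∉ S} := by
  classical
  obtain ⟨S₀, hc₀, hS₀⟩ := exists_tds_card (exists_adj_of_connected hc (by omega))
  obtain ⟨S, hS', hmax'⟩ := Finset.exists_max_image
    (Finset.univ.filter fun D : Finset W => isTDS G D ∧ D.card = tdNum G)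
    (fun D => (innerEdges G D).ncard) ⟨S₀, by simp [hS₀, hc₀]⟩
  obtain ⟨hS, hcS⟩ : isTDS G S ∧ S.card = tdNum G := by simpa using hS'
  have hmin : ∀ D, isTDS G D → S.card ≤ D.card := fun D hD => hcS ▸ tdNum_le hD
  have hmax : ∀ D, isTDS G D → D.card = S.card →
      (innerEdges G D).ncard ≤ (innerEdges G S).ncard := fun D hD hDc =>
    hmax' D (by simp [hD, hDc, hcS])
  have hex : ∀ v, ∃ z, v ∈ S → z ∉ S ∧ Charges G S v z := fun v => by
    by_cases hv : v ∈ S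
    · obtain ⟨z, hz⟩ := exists_charges hc hm hS hmin hmax hv
      exact ⟨z, fun _ => hz⟩
    · exact ⟨v, fun h => absurd h hv⟩
  choose φ hφ using hex
  have hcc : S.card + Sᶜ.card = Fintype.card W := Finset.card_add_card_compl S
  have hfib : S.card = ∑ z ∈ Sᶜ, (S.filter fun v => φ v = z).card :=
    Finset.card_eq_sum_card_fiberwise fun v hv => by simpa using (hφ v hv).1
  have hle : ∀ z ∈ Sᶜ, (S.filter fun v => φ v = z).card ≤ 2 := fun z _ =>
    charges_card_le (G := G) z _ (Finset.filter_subset _ _) fun v hv => by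
      obtain ⟨hvS, rfl⟩ := Finset.mem_filter.1 hv
      exact (hφ v hvS).2
  have htwo : ∀ z ∈ Sᶜ, (S.filter fun v => φ v = z).card = 2 := by
    refine (Finset.sum_eq_sum_iff_of_le hle).1 ?_
    rw [← hfib, Finset.sum_const, smul_eq_mul]
    omega
  have hpair : ∀ z : {z // z ∉ S}, ∃ a h, a ∈ S ∧ h ∈ S ∧ a ≠ h ∧ φ a = z ∧ φ h = z ∧
      (∀ s ∈ S, φ s = z → s = a ∨ s = h) ∧ OnlyNbr G S a h ∧
      (OnlyNbr G S z a ∨ OnlyNbr G S h a ∧ ∀ s ∈ S, G.Adj z s ↔ s = a ∨ s = h) := by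
    rintro ⟨z, hz⟩
    obtain ⟨p, q, hpq, hF⟩ := Finset.card_eq_two.1 (htwo z (by simpa using hz))
    have hmem : ∀ s, s ∈ S ∧ φ s = z ↔ s = p ∨ s = q := fun s => by
      rw [← Finset.mem_filter (p := fun v => φ v = z), hF]; simp
    obtain ⟨hp, hpz⟩ := (hmem p).2 (.inl rfl)
    obtain ⟨hq, hqz⟩ := (hmem q).2 (.inr rfl)
    obtain ⟨a, h, ha, hh, hah, hor, hrest⟩ :=
      charges_pair hp hq (hpz ▸ (hφ p hp).2) (hqz ▸ (hφ q hq).2) hpq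
    exact ⟨a, h, ha, hh, hah, by grind, by grind, by grind, hrest⟩
  choose a h haS hhS hah hφa hφh hall honly hor using hpair
  have inj1 : ∀ i j : {z // z ∉ S}, φ (a i) = φ (a j) → i = j := fun i j hij =>
    Subtype.ext (by rw [← hφa i, ← hφa j, hij])
  have inj2 : ∀ i j : {z // z ∉ S}, φ (a i) = φ (h j) → i = j := fun i j hij =>
    Subtype.ext (by rw [← hφa i, ← hφh j, hij])
  have inj3 : ∀ i j : {z // z ∉ S}, φ (h i) = φ (h j) → i = j := fun i j hij =>
    Subtype.ext (by rw [← hφh i, ← hφh j, hij])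
  have haj : ∀ i, ∀ s ∈ S, G.Adj (a i) s ↔ s = h i := fun i => (honly i).2
  refine ⟨S, h, a, fun z => z, ?_, ?_⟩
  · refine
    { cover := ?_
      h_inj := fun i j hij => inj3 i j (by rw [hij])
      a_inj := fun i j hij => inj1 i j (by rw [hij])
      b_inj := fun i j hij => Subtype.ext hij
      h_ne_a := ?_
      h_ne_b := fun i j hij => j.2 (hij ▸ hhS i)
      a_ne_b := fun i j hij => j.2 (hij ▸ haS i)
      ha := fun i => ((haj i _ (hhS i)).2 rfl).symm
      ab := ?_
      ha_eq := fun i j hij => inj3 i j (by rw [(haj j _ (hhS i)).1 hij.symm])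
      ab_eq := ?_
      aa := ?_
      hb_eq := ?_
      tri := ?_ }
    · intro w
      by_cases hw : w ∈ S
      · refine ⟨⟨φ w, (hφ w hw).1⟩, ?_⟩
        have := hall ⟨φ w, (hφ w hw).1⟩ w hw rfl
        tauto
      · exact ⟨⟨w, hw⟩, by simp⟩
    · intro i j hij
      obtain rfl := inj2 j i (by rw [hij])
      exact hah _ hij.symm
    · intro i
      rcases hor i with ho | ⟨-, ho⟩
      · exact ((ho.2 _ (haS i)).2 rfl).symm
      · exact ((ho _ (haS i)).2 (.inl rfl)).symm
    · intro i j hij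
      rcases hor j with ho | ⟨-, ho⟩
      · exact inj1 i j (by rw [(ho.2 _ (haS i)).1 hij.symm])
      · rcases (ho _ (haS i)).1 hij.symm with e | e
        · exact inj1 i j (by rw [e])
        · exact inj2 i j (by rw [e])
    · intro i j hij
      have e := (haj i _ (haS j)).1 hij
      obtain rfl := inj2 j i (by rw [e])
      exact hah _ e
    · intro i j hij
      rcases hor j with ho | ⟨-, ho⟩
      · exact (inj2 j i (by rw [(ho.2 _ (hhS i)).1 hij.symm])).symm
      · rcases (ho _ (hhS i)).1 hij.symm with e | e
        · exact (inj2 j i (by rw [e])).symm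
        · exact inj3 i j (by rw [e])
    · intro i j hi hij
      rcases hor i with ho | ⟨ho, -⟩
      · exact hah i ((ho.2 _ (hhS i)).1 hi.symm).symm
      · have e := (ho.2 _ (hhS j)).1 hij
        obtain rfl := inj2 i j (by rw [e])
        exact hah _ e.symm
  · have : Nat.card {z // z ∉ S} = Sᶜ.card := by
      rw [Nat.card_eq_fintype_card, Fintype.card_subtype]
      congr 1
      ext z
      simp
    omega

end Extremal

theorem tdNum_eq_two_thirds_iff {W : Type} [Fintype W] (G : SimpleGraph W)
    (hc : G.Connected) (hm : 3 ≤ Fintype.card W) :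
    3 * tdNum G = 2 * Fintype.card W ↔
      (Nonempty (G ≃g cycle 3) ∨ Nonempty (G ≃g cycle 6) ∨
        ∃ (V : Type) (_ : Fintype V) (H : SimpleGraph V),
          H.Connected ∧ Nonempty (G ≃g attachP3 H)) := by
  classical
  have hG := exists_adj_of_connected hc (by omega)
  constructor
  · intro heq
    obtain ⟨S, h, a, b, T, hcard⟩ := exists_triples hc hm heq
    rw [Nat.card_eq_fintype_card] at hcard
    rcases T.classify hc (fun D hD => hcard ▸ tdNum_le hD) with h3 | h6 | ⟨H, hH, hiso⟩
    · exact .inl h3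
    · exact .inr (.inl h6)
    · exact .inr (.inr ⟨_, inferInstance, H, hH, hiso⟩)
  · rintro (⟨⟨f⟩⟩ | ⟨⟨f⟩⟩ | ⟨V, _, H, -, ⟨f⟩⟩)
    · rw [tdNum_eq_of_iso f hG, tdNum_cycle_three, Fintype.card_congr f.toEquiv, ZMod.card]
    · rw [tdNum_eq_of_iso f hG, tdNum_cycle_six, Fintype.card_congr f.toEquiv, ZMod.card]
    · rw [tdNum_eq_of_iso f hG, tdNum_attachP3, Fintype.card_congr f.toEquiv, Fintype.card_sum,
        Fintype.card_sum]
      ring
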